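/- Let n : ℕ and a : Fin n → Fin 4, and suppose there is exactly one index k : Fin n with a k ≠ 0 (a is a weight-one nonidentity Pauli string). Let X⁽ⁿ⁾ = P_{fun _ => 1} (the n-fold tensor of X) and Z⁽ⁿ⁾ = P_{fun _ => 3} (the n-fold tensor of Z). Then P_a * X⁽ⁿ⁾ = -(X⁽ⁿ⁾ * P_a) or P_a * Z⁽ⁿ⁾ = -(Z⁽ⁿ⁾ * P_a); that is, every weight-one nonidentity Pauli string anticommutes with X^{⊗n} or with Z^{⊗n}. -/

import Mathlib

open Matrix Complex Kronecker

noncomputable def pauli : Fin 4 → Matrix (Fin 2) (Fin 2) ℂ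
  | 0 => !![1, 0; 0, 1]
  | 1 => !![0, 1; 1, 0]
  | 2 => !![0, -Complex.I; Complex.I, 0]
  | 3 => !![1, 0; 0, -1]

noncomputable def PauliString {n : ℕ} (a : Fin n → Fin 4) :
    Matrix (Fin n → Fin 2) (Fin n → Fin 2) ℂ :=
  Matrix.of fun f g => ∏ i, pauli (a i) (f i) (g i)

/-!
Exchanging two Pauli strings exchanges their factors site by site, at the cost of one sign for each
site where the two letters anticommute; so the strings anticommute when the number of such sites is
odd. A weight-one string and `X⊗ⁿ` have one such site unless the nonidentity letter is `X`, in which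
case the string and `Z⊗ⁿ` have one.
-/

section PiKronecker

variable {ι l m n R : Type*} [Fintype ι] [CommSemiring R]

/-- The Kronecker product `⨂ i, M i` of a finite family of matrices, with rows and columns indexed
by functions on `ι` so that no order on the factors has to be chosen. -/
def piKronecker (M : ι → Matrix m n R) : Matrix (ι → m) (ι → n) R :=
  Matrix.of fun f g => ∏ i, M i (f i) (g i)

theorem piKronecker_mul_piKronecker [DecidableEq ι] [Fintype m]
    (M : ι → Matrix l m R) (N : ι → Matrix m n R) :
    piKronecker M * piKronecker N = piKronecker fun i => M i * N i := by
  ext f g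
  simp only [piKronecker, mul_apply, of_apply, ← Finset.prod_mul_distrib, Fintype.prod_sum]

theorem piKronecker_smul (c : ι → R) (M : ι → Matrix m n R) :
    piKronecker (fun i => c i • M i) = (∏ i, c i) • piKronecker M := by
  ext f g
  simp only [piKronecker, of_apply, Matrix.smul_apply, smul_eq_mul, Finset.prod_mul_distrib]

end PiKronecker

theorem pauliString_eq_piKronecker {n : ℕ} (a : Fin n → Fin 4) :
    PauliString a = piKronecker fun i => pauli (a i) :=
  rfl

theorem pauli_mul_eq_sign_smul (p q : Fin 4) :
    pauli p * pauli q =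
      (if p ≠ 0 ∧ q ≠ 0 ∧ p ≠ q then (-1 : ℂ) else 1) • (pauli q * pauli p) := by
  fin_cases p <;> fin_cases q <;> simp [pauli]

/-- The positions at which the single-qubit factors of two Pauli strings anticommute: both factors
are nonidentity and they differ. -/
def anticommutingSites {n : ℕ} (a b : Fin n → Fin 4) : Finset (Fin n) :=
  {i | a i ≠ 0 ∧ b i ≠ 0 ∧ a i ≠ b i}

theorem anticommutingSites_eq_singleton {n : ℕ} {a b : Fin n → Fin 4} {k : Fin n}
    (ha : ∀ i, a i ≠ 0 ↔ i = k) (hb : b k ≠ 0) (hab : a k ≠ b k) :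
    anticommutingSites a b = {k} := by
  ext i
  simp only [anticommutingSites, Finset.mem_filter_univ, Finset.mem_singleton, ha]
  exact ⟨And.left, by rintro rfl; exact ⟨rfl, hb, hab⟩⟩

theorem pauliString_mul_eq_neg_one_pow_smul {n : ℕ} (a b : Fin n → Fin 4) :
    PauliString a * PauliString b =
      (-1 : ℂ) ^ (anticommutingSites a b).card • (PauliString b * PauliString a) := by
  have prod_signs : (∏ i, if a i ≠ 0 ∧ b i ≠ 0 ∧ a i ≠ b i then (-1 : ℂ) else 1) =
      (-1) ^ (anticommutingSites a b).card := by
    rw [← Finset.prod_filter, Finset.prod_const, anticommutingSites]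
  calc PauliString a * PauliString b
    _ = piKronecker fun i => pauli (a i) * pauli (b i) := by
      simp only [pauliString_eq_piKronecker, piKronecker_mul_piKronecker]
    _ = piKronecker fun i =>
          (if a i ≠ 0 ∧ b i ≠ 0 ∧ a i ≠ b i then (-1 : ℂ) else 1) •
            (pauli (b i) * pauli (a i)) :=
      congrArg piKronecker (funext fun i => pauli_mul_eq_sign_smul (a i) (b i))
    _ = (-1 : ℂ) ^ (anticommutingSites a b).card • (PauliString b * PauliString a) := by
      rw [piKronecker_smul, prod_signs, ← piKronecker_mul_piKronecker]
      simp only [pauliString_eq_piKronecker]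

theorem pauliString_anticommute_of_odd {n : ℕ} {a b : Fin n → Fin 4}
    (h : Odd (anticommutingSites a b).card) :
    PauliString a * PauliString b = -(PauliString b * PauliString a) := by
  rw [pauliString_mul_eq_neg_one_pow_smul, h.neg_one_pow, neg_one_smul]

theorem weight_one_anticommutes_with_Xn_or_Zn (n : ℕ) (a : Fin n → Fin 4)
    (hw : ∃! k : Fin n, a k ≠ 0) :
    PauliString a * PauliString (fun _ : Fin n => (1 : Fin 4)) =
        -(PauliString (fun _ : Fin n => (1 : Fin 4)) * PauliString a) ∨
      PauliString a * PauliString (fun _ : Fin n => (3 : Fin 4)) =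
        -(PauliString (fun _ : Fin n => (3 : Fin 4)) * PauliString a) := by
  obtain ⟨k, hk, k_unique⟩ := hw
  have support_a : ∀ i, a i ≠ 0 ↔ i = k := fun i => ⟨k_unique i, by rintro rfl; exact hk⟩
  have anticommute (c : Fin 4) (hc : c ≠ 0) (hkc : a k ≠ c) :
      PauliString a * PauliString (fun _ : Fin n => c) =
        -(PauliString (fun _ : Fin n => c) * PauliString a) := by
    apply pauliString_anticommute_of_odd
    rw [anticommutingSites_eq_singleton support_a hc hkc, Finset.card_singleton]
    exact odd_one
  by_cases hX : a k = 1
  · exact .inr (anticommute 3 (by decide) (by rw [hX]; decide))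
  · exact .inl (anticommute 1 one_ne_zero hX)
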